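/- Let (Ω, 𝓕, ℙ) be a probability space, let U : Ω → ℝⁿ and E : Ω → ℝᵐ be independent random vectors, let f : ℝⁿ → ℝᵐ be measurable, and set Y = f(U) + E. Then for ℙ∘U⁻¹-almost every u ∈ ℝⁿ, the conditional distribution of Y given U = u equals the law of E translated by f(u), i.e., it is the pushforward of the law of E under the map e ↦ f(u) + e. In particular, if E has a density ρ with respect to Lebesgue measure on ℝᵐ, then the conditional density of Y given U = u is y ↦ ρ(y − f(u)). -/

import Mathlib

open MeasureTheory ProbabilityTheory
open scoped ENNReal

/-!
Conditioning on `U = u` freezes `U` at the value `u` in `f U + E`, and independence leaves the law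
of `E` untouched, so what remains is `f u + E` with `E` having its unconditional law. On the level
of measures: the law of `(U, f U + E)` is the image of the product of the laws of `U` and `E` under
`(u, e) ↦ (u, f u + e)`, which disintegrates over its first marginal into the translated laws of
`E`, and disintegrations are a.e. unique.
-/

section CondDistrib

variable {Ω α β γ : Type*} [MeasurableSpace Ω] [MeasurableSpace α] [MeasurableSpace β]
  [MeasurableSpace γ]

lemma id_prod_map_apply {κ : Kernel α β} [IsSFiniteKernel κ] {g : α × β → γ} (hg : Measurable g)
    (x : α) : (Kernel.id ×ₖ κ).map g x = (κ x).map fun y => g (x, y) := by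
  rw [Kernel.map_apply _ hg, Kernel.prod_apply, Kernel.id_apply, Measure.dirac_prod,
    Measure.map_map hg measurable_prodMk_left, Function.comp_def]

lemma compProd_id_prod_map {μ : Measure α} [SFinite μ] {κ : Kernel α β} [IsSFiniteKernel κ]
    {g : α × β → γ} (hg : Measurable g) :
    μ ⊗ₘ (Kernel.id ×ₖ κ).map g = (μ ⊗ₘ κ).map fun p => (p.1, g p) := by
  have hpair : Measurable fun p : α × β => (p.1, g p) := measurable_fst.prodMk hg
  ext s hs
  rw [Measure.compProd_apply hs, Measure.map_apply hpair hs, Measure.compProd_apply (hpair hs)]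
  refine lintegral_congr fun x => ?_
  rw [id_prod_map_apply hg, Measure.map_apply (by fun_prop) (measurable_prodMk_left hs)]
  rfl

variable [StandardBorelSpace γ] [Nonempty γ] {μ : Measure Ω} [IsFiniteMeasure μ]
  {X : Ω → α} {Y : Ω → β} {g : α × β → γ}

lemma condDistrib_comp_prodMk_of_map_eq_compProd (hX : AEMeasurable X μ) (hY : AEMeasurable Y μ)
    {κ : Kernel α β} [IsFiniteKernel κ] (hκ : μ.map (fun ω => (X ω, Y ω)) = μ.map X ⊗ₘ κ)
    (hg : Measurable g) :
    ∀ᵐ x ∂μ.map X, condDistrib (fun ω => g (X ω, Y ω)) X μ x = (κ x).map fun y => g (x, y) := by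
  have hjoint : μ.map (fun ω => (X ω, g (X ω, Y ω))) =
      μ.map X ⊗ₘ (Kernel.id ×ₖ κ).map g := by
    rw [compProd_id_prod_map hg, ← hκ,
      AEMeasurable.map_map_of_aemeasurable (by fun_prop) (by fun_prop), Function.comp_def]
  filter_upwards [condDistrib_ae_eq_of_measure_eq_compProd X (by fun_prop) hjoint] with x hx
  rw [hx, id_prod_map_apply hg]

lemma condDistrib_comp_prodMk_of_indepFun (hX : AEMeasurable X μ) (hY : AEMeasurable Y μ)
    (hXY : IndepFun X Y μ) (hg : Measurable g) :
    ∀ᵐ x ∂μ.map X,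
      condDistrib (fun ω => g (X ω, Y ω)) X μ x = (μ.map Y).map fun y => g (x, y) := by
  have hprod : μ.map (fun ω => (X ω, Y ω)) = μ.map X ⊗ₘ Kernel.const α (μ.map Y) := by
    rw [Measure.compProd_const, hXY.map_prod_eq_prod_map_map hX hY]
  exact condDistrib_comp_prodMk_of_map_eq_compProd hX hY hprod hg

end CondDistrib

section WithDensity

lemma map_withDensity_comp_of_measurePreserving {α β : Type*} [MeasurableSpace α]
    [MeasurableSpace β] {μ : Measure α} {ν : Measure β} {φ : α → β}
    (hφ : MeasurePreserving φ μ ν) (hφ_emb : MeasurableEmbedding φ) (ρ : β → ℝ≥0∞) :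
    (μ.withDensity (ρ ∘ φ)).map φ = ν.withDensity ρ := by
  ext s hs
  rw [Measure.map_apply hφ.measurable hs, withDensity_apply _ (hφ.measurable hs),
    withDensity_apply _ hs]
  exact hφ.setLIntegral_comp_preimage_emb hφ_emb ρ s

lemma map_add_left_withDensity {G : Type*} [AddGroup G] [MeasurableSpace G] [MeasurableAdd G]
    (ν : Measure G) [ν.IsAddLeftInvariant] (ρ : G → ℝ≥0∞) (a : G) :
    (ν.withDensity ρ).map (a + ·) = ν.withDensity fun y => ρ (-a + y) := by
  simpa only [Function.comp_def, neg_add_cancel_left] using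
    map_withDensity_comp_of_measurePreserving (measurePreserving_add_left ν a)
      (measurableEmbedding_addLeft a) fun y => ρ (-a + y)

end WithDensity

theorem condDistrib_additive_noise_general {Ω α G : Type*} [MeasurableSpace Ω]
    [MeasurableSpace α] [AddGroup G] [MeasurableSpace G] [StandardBorelSpace G] [MeasurableAdd₂ G]
    {μ : Measure Ω} [IsFiniteMeasure μ] {U : Ω → α} {E : Ω → G} (hU : AEMeasurable U μ)
    (hE : AEMeasurable E μ) (hInd : IndepFun U E μ) {f : α → G} (hf : Measurable f)
    (ν : Measure G) [ν.IsAddLeftInvariant] :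
    (∀ᵐ u ∂μ.map U,
        condDistrib (fun ω => f (U ω) + E ω) U μ u = (μ.map E).map fun e => f u + e) ∧
    ∀ ρ : G → ℝ≥0∞, μ.map E = ν.withDensity ρ →
      ∀ᵐ u ∂μ.map U,
        condDistrib (fun ω => f (U ω) + E ω) U μ u = ν.withDensity fun y => ρ (-f u + y) := by
  have translated_law : ∀ᵐ u ∂μ.map U,
      condDistrib (fun ω => f (U ω) + E ω) U μ u = (μ.map E).map fun e => f u + e :=
    condDistrib_comp_prodMk_of_indepFun (g := fun p => f p.1 + p.2) hU hE hInd (by fun_prop)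
  refine ⟨translated_law, fun ρ hρ => ?_⟩
  filter_upwards [translated_law] with u hu
  rw [hu, hρ, map_add_left_withDensity]

/-- For independent random vectors `U`, `E` and `Y = f(U) + E`, the conditional
distribution of `Y` given `U = u` is, for `law U`-a.e. `u`, the law of `E`
translated by `f u`. In particular, if `E` has density `ρ` w.r.t. Lebesgue
measure, then the conditional density of `Y` given `U = u` is `y ↦ ρ (y − f u)`. -/
theorem condDistrib_additive_noise {Ω : Type*} [MeasureSpace Ω]
    [IsProbabilityMeasure (ℙ : Measure Ω)] (n m : ℕ)
    (U : Ω → EuclideanSpace ℝ (Fin n)) (E : Ω → EuclideanSpace ℝ (Fin m))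
    (hU : Measurable U) (hE : Measurable E)
    (hInd : IndepFun U E ℙ)
    (f : EuclideanSpace ℝ (Fin n) → EuclideanSpace ℝ (Fin m)) (hf : Measurable f)
    (Y : Ω → EuclideanSpace ℝ (Fin m)) (hY : Y = fun ω => f (U ω) + E ω) :
    (∀ᵐ u ∂(Measure.map U ℙ),
        condDistrib Y U ℙ u = Measure.map (fun e => f u + e) (Measure.map E ℙ)) ∧
    ∀ ρ : EuclideanSpace ℝ (Fin m) → ℝ≥0∞, Measurable ρ →
      Measure.map E ℙ = volume.withDensity ρ →
      ∀ᵐ u ∂(Measure.map U ℙ),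
        condDistrib Y U ℙ u = volume.withDensity (fun y => ρ (y - f u)) := by
  subst hY
  exact (condDistrib_additive_noise_general hU.aemeasurable hE.aemeasurable hInd hf
    volume).imp_right fun h ρ _ hρ => by simpa only [sub_eq_neg_add] using h ρ hρ
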